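/- Let P_1,…,P_s be distinct points of ℙ²(ℂ) and let d ≥ 3 be an integer such that 6s ≤ d² + 9d + 10 and such that, for every integer t with 1 ≤ 2t ≤ d + 3 and every nonzero homogeneous polynomial C of degree t in ℂ[x_0,x_1,x_2], at most t(d+3−t) − 2 of the points P_1,…,P_s lie on the plane curve {C = 0}. Then the linear system of plane curves of degree d passing through P_1,…,P_s has no base points away from P_1,…,P_s: for every point Q ∈ ℙ²(ℂ) \ {P_1,…,P_s} there exists a homogeneous polynomial of degree d in ℂ[x_0,x_1,x_2] vanishing at each of P_1,…,P_s and not vanishing at Q. -/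

import Mathlib

open MvPolynomial

noncomputable section

/-- The projective space `ℙ^N(ℂ)`. -/
abbrev ProjPt (N : ℕ) := Projectivization ℂ (Fin (N + 1) → ℂ)

/-- A (homogeneous) polynomial vanishes at a point of projective space. -/
def VanishesAt {N : ℕ} (F : MvPolynomial (Fin (N + 1)) ℂ) (p : ProjPt N) : Prop :=
  eval p.rep F = 0

/-!
If `Q` is a base point, then evaluation at `Q` on forms of degree `d` is a linear combination of the
evaluations at some of the points `P_i`, which gives a relation with all coefficients nonzero
between the evaluations at `Q` and at these points. Multiplying forms of degrees `m` and `d - m`,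
such a relation makes two evaluation images orthogonal, so that the Hilbert functions of its
support in these degrees add up to at most the number of its points.

Let `F` be a form of minimal degree `t` through the support. The relation forces `F` to divide every
form of degree `d + 2 - t` or less through the support: otherwise one obtains two coprime forms
through some of the points and a relation between these points in a degree in which a complete
intersection imposes independent conditions. If `2t ≤ d + 3`, the Hilbert functions in degrees
`t - 1` and `d + 1 - t` are now known and show that the support has at least `t(d + 3 - t)`
points, all but one of them among the `P_i`. If `2t > d + 3`, the Hilbert function of the support is
maximal in degrees about `d / 2`, and there are too many points.
-/

section HomogeneousFactors

variable {σ R : Type*} [CommSemiring R]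

lemma isHomogeneous_of_homogeneousComponent_eq_zero {P : MvPolynomial σ R} {n : ℕ}
    (h : ∀ k ≠ n, homogeneousComponent k P = 0) : P.IsHomogeneous n := by
  rw [← sum_homogeneousComponent P]
  refine IsHomogeneous.sum _ _ _ fun k _ ↦ ?_
  obtain rfl | hk := eq_or_ne k n
  · exact homogeneousComponent_isHomogeneous k P
  · exact h k hk ▸ isHomogeneous_zero σ R n

/-- The substitution `X i ↦ X i * T`, which records the grading of `MvPolynomial σ R` in the
powers of `T`. -/
def gradingHom (σ R : Type*) [CommSemiring R] :
    MvPolynomial σ R →ₐ[R] Polynomial (MvPolynomial σ R) :=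
  aeval fun i ↦ Polynomial.C (X i) * Polynomial.X

lemma coeff_gradingHom (P : MvPolynomial σ R) (k : ℕ) :
    (gradingHom σ R P).coeff k = homogeneousComponent k P := by
  induction P using MvPolynomial.induction_on' with
  | monomial m r =>
    have hm : gradingHom σ R (monomial m r) =
        Polynomial.C (monomial m r) * Polynomial.X ^ m.degree := by
      rw [gradingHom, aeval_monomial, monomial_eq, Finsupp.degree_apply]
      simp only [Finsupp.prod, mul_pow, Finset.prod_mul_distrib, Finset.prod_pow_eq_pow_sum,
        map_mul, map_prod, map_pow, ← mul_assoc]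
      rfl
    rw [hm, Polynomial.coeff_C_mul_X_pow,
      homogeneousComponent_of_mem (isHomogeneous_monomial r rfl)]
  | add P Q hP hQ => rw [map_add, Polynomial.coeff_add, hP, hQ, map_add]

lemma gradingHom_of_isHomogeneous {P : MvPolynomial σ R} {n : ℕ} (hP : P.IsHomogeneous n) :
    gradingHom σ R P = Polynomial.C P * Polynomial.X ^ n := by
  ext1 k
  rw [coeff_gradingHom, homogeneousComponent_of_mem hP, Polynomial.coeff_C_mul_X_pow]

lemma gradingHom_ne_zero {P : MvPolynomial σ R} (hP : P ≠ 0) : gradingHom σ R P ≠ 0 := by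
  contrapose! hP
  rw [← sum_homogeneousComponent P]
  exact Finset.sum_eq_zero fun k _ ↦ by rw [← coeff_gradingHom, hP, Polynomial.coeff_zero]

variable [NoZeroDivisors R]

lemma exists_isHomogeneous_of_mul {A B : MvPolynomial σ R} {n : ℕ}
    (h : (A * B).IsHomogeneous n) (h0 : A * B ≠ 0) : ∃ k, A.IsHomogeneous k := by
  obtain ⟨hA, hB⟩ := mul_ne_zero_iff.mp h0
  have hA' := gradingHom_ne_zero hA
  have hB' := gradingHom_ne_zero hB
  have hAB : gradingHom σ R A * gradingHom σ R B = Polynomial.C (A * B) * Polynomial.X ^ n := by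
    rw [← map_mul, gradingHom_of_isHomogeneous h]
  have hdeg : (gradingHom σ R A).natDegree + (gradingHom σ R B).natDegree = n := by
    rw [← Polynomial.natDegree_mul hA' hB', hAB, Polynomial.natDegree_C_mul_X_pow n _ h0]
  have htrail : (gradingHom σ R A).natTrailingDegree + (gradingHom σ R B).natTrailingDegree
      = n := by
    rw [← Polynomial.natTrailingDegree_mul hA' hB', hAB, Polynomial.C_mul_X_pow_eq_monomial,
      Polynomial.natTrailingDegree_monomial h0]
  have hA_le := (gradingHom σ R A).natTrailingDegree_le_natDegree
  have hB_le := (gradingHom σ R B).natTrailingDegree_le_natDegree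
  refine ⟨(gradingHom σ R A).natDegree, isHomogeneous_of_homogeneousComponent_eq_zero
    fun k hk ↦ ?_⟩
  rw [← coeff_gradingHom]
  obtain hlt | hgt := hk.lt_or_gt
  · exact Polynomial.coeff_eq_zero_of_lt_natTrailingDegree (by lia)
  · exact Polynomial.coeff_eq_zero_of_natDegree_lt hgt

lemma isHomogeneous_right_of_mul {F Q : MvPolynomial σ R} {a n : ℕ} (hF : F.IsHomogeneous a)
    (hF0 : F ≠ 0) (h : (F * Q).IsHomogeneous (a + n)) : Q.IsHomogeneous n := by
  obtain rfl | hQ0 := eq_or_ne Q 0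
  · exact isHomogeneous_zero σ R n
  have hFQ := mul_ne_zero hF0 hQ0
  obtain ⟨k, hk⟩ := exists_isHomogeneous_of_mul (mul_comm F Q ▸ h) (mul_comm F Q ▸ hFQ)
  have hkn := h.inj_right (hF.mul hk) hFQ
  rwa [show n = k by lia]

lemma exists_isHomogeneous_of_dvd {F P : MvPolynomial σ R} {n : ℕ} (hP : P.IsHomogeneous n)
    (hP0 : P ≠ 0) (h : F ∣ P) : ∃ a, F.IsHomogeneous a := by
  obtain ⟨Q, rfl⟩ := h
  exact exists_isHomogeneous_of_mul hP hP0

lemma isUnit_of_isHomogeneous_zero {K : Type*} [Field K] {P : MvPolynomial σ K}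
    (hP : P.IsHomogeneous 0) (hP0 : P ≠ 0) : IsUnit P := by
  have hPC := totalDegree_eq_zero_iff_eq_C.mp (hP.totalDegree hP0)
  refine hPC ▸ IsUnit.map C (isUnit_iff_ne_zero.mpr fun h ↦ hP0 ?_)
  rw [hPC, h, C_0]

end HomogeneousFactors

section Evaluation

variable {σ R : Type*}

lemma aeval_smul_of_isHomogeneous [CommSemiring R] {A : Type*} [CommSemiring A] [Algebra R A]
    {P : MvPolynomial σ R} {n : ℕ} (hP : P.IsHomogeneous n) (c : A) (v : σ → A) :
    aeval (c • v) P = c ^ n * aeval v P := by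
  rw [aeval_def, aeval_def, eval₂_eq, eval₂_eq, Finset.mul_sum]
  refine Finset.sum_congr rfl fun m hm ↦ ?_
  simp only [hP.degree_eq_sum_deg_support hm, Pi.smul_apply, smul_eq_mul, mul_pow,
    Finset.prod_mul_distrib, Finset.prod_pow_eq_pow_sum]
  ring

lemma eval_smul_of_isHomogeneous [CommSemiring R] {P : MvPolynomial σ R} {n : ℕ}
    (hP : P.IsHomogeneous n) (c : R) (v : σ → R) : eval (c • v) P = c ^ n * eval v P :=
  aeval_smul_of_isHomogeneous hP c v

lemma exists_apply_eq_one_and_eval_ne_zero {K : Type*} [Field K] [Infinite K]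
    {F : MvPolynomial σ K} {n : ℕ} (hF : F.IsHomogeneous n) (hF0 : F ≠ 0) (i : σ) :
    ∃ v : σ → K, v i = 1 ∧ eval v F ≠ 0 := by
  obtain ⟨u, hu⟩ : ∃ u, eval u (F * X i) ≠ 0 := by
    by_contra! h
    exact mul_ne_zero hF0 (X_ne_zero i)
      ((hF.mul (isHomogeneous_X K i)).eq_zero_of_forall_eval_eq_zero h)
  rw [map_mul, eval_X, mul_ne_zero_iff] at hu
  refine ⟨(u i)⁻¹ • u, inv_mul_cancel₀ hu.2, ?_⟩
  rw [eval_smul_of_isHomogeneous hF]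
  exact mul_ne_zero (pow_ne_zero _ (inv_ne_zero hu.2)) hu.1

end Evaluation

section Dimensions

open Module

variable {σ K : Type*} [Field K]

lemma finrank_homogeneousSubmodule [Fintype σ] (n : ℕ) :
    finrank K (homogeneousSubmodule σ K n) = (Fintype.card σ).multichoose n := by
  classical
  have hsupp : {m : σ →₀ ℕ | m.degree = n} =
      (Finset.univ : Finset σ).finsuppAntidiag n := by
    ext m
    simp [Finset.mem_finsuppAntidiag, Finsupp.degree_eq_sum]
  rw [homogeneousSubmodule_eq_finsupp_supported, hsupp,
    (AddMonoidAlgebra.supportedEquivFinsupp (S := K) (R := K) _).finrank_eq,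
    finrank_finsupp_self, ← Nat.card_eq_fintype_card, Nat.card_coe_set_eq, Set.ncard_coe_finset,
    Finset.card_finsuppAntidiag_nat_eq_multichoose, Finset.card_univ]

instance finiteDimensional_homogeneousSubmodule [Finite σ] (n : ℕ) :
    FiniteDimensional K (homogeneousSubmodule σ K n) :=
  Module.Finite.iff_fg.mpr (homogeneousSubmodule_fg σ K n)

lemma finrank_binaryForms (n : ℕ) : finrank K (homogeneousSubmodule (Fin 2) K n) = n + 1 := by
  rw [finrank_homogeneousSubmodule, Fintype.card_fin, Nat.multichoose_two]

lemma two_mul_finrank_ternaryForms (n : ℕ) :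
    2 * finrank K (homogeneousSubmodule (Fin 3) K n) = (n + 2) * (n + 1) := by
  rw [finrank_homogeneousSubmodule, Fintype.card_fin, Nat.multichoose_eq,
    show 3 + n - 1 = n + 2 by lia, Nat.choose_symm_add, mul_comm,
    Nat.choose_two_right, Nat.div_mul_cancel (Nat.even_mul_pred_self _).two_dvd]
  rfl

/-- The homogeneous polynomials of degree `n` divisible by `F`: the degree `n` part of the ideal
`(F)` when `F` is homogeneous. -/
def multiplesInDegree (F : MvPolynomial σ K) (n : ℕ) : Submodule K (MvPolynomial σ K) :=
  homogeneousSubmodule σ K n ⊓ (Ideal.span {F}).restrictScalars K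

lemma mem_multiplesInDegree {F P : MvPolynomial σ K} {n : ℕ} :
    P ∈ multiplesInDegree F n ↔ P.IsHomogeneous n ∧ F ∣ P := by
  rw [multiplesInDegree, Submodule.mem_inf, Submodule.restrictScalars_mem,
    Ideal.mem_span_singleton, mem_homogeneousSubmodule]

lemma multiplesInDegree_le (F : MvPolynomial σ K) (n : ℕ) :
    multiplesInDegree F n ≤ homogeneousSubmodule σ K n :=
  inf_le_left

instance finiteDimensional_multiplesInDegree [Finite σ] (F : MvPolynomial σ K) (n : ℕ) :
    FiniteDimensional K (multiplesInDegree F n) :=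
  Submodule.finiteDimensional_of_le (multiplesInDegree_le F n)

lemma multiplesInDegree_add {F : MvPolynomial σ K} {a : ℕ} (hF : F.IsHomogeneous a)
    (hF0 : F ≠ 0) (n : ℕ) :
    multiplesInDegree F (a + n) = (homogeneousSubmodule σ K n).map (LinearMap.mulLeft K F) := by
  ext P
  rw [mem_multiplesInDegree, Submodule.mem_map]
  constructor
  · rintro ⟨hP, Q, rfl⟩
    exact ⟨Q, isHomogeneous_right_of_mul hF hF0 hP, rfl⟩
  · rintro ⟨Q, hQ, rfl⟩
    exact ⟨hF.mul hQ, dvd_mul_right F Q⟩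

lemma finrank_multiplesInDegree_add {F : MvPolynomial σ K} {a : ℕ} (hF : F.IsHomogeneous a)
    (hF0 : F ≠ 0) (n : ℕ) :
    finrank K (multiplesInDegree F (a + n)) = finrank K (homogeneousSubmodule σ K n) := by
  rw [multiplesInDegree_add hF hF0]
  exact (Submodule.equivMapOfInjective _ (mul_right_injective₀ hF0) _).finrank_eq.symm

lemma multiplesInDegree_eq_bot {F : MvPolynomial σ K} {a n : ℕ} (hF : F.IsHomogeneous a)
    (hna : n < a) : multiplesInDegree F n = ⊥ := by
  rw [eq_bot_iff]
  rintro P hP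
  obtain ⟨hP, Q, rfl⟩ := mem_multiplesInDegree.mp hP
  by_contra hFQ
  have hQ0 := right_ne_zero_of_mul hFQ
  have hF0 := left_ne_zero_of_mul hFQ
  have htotal := totalDegree_mul_of_isDomain hF0 hQ0
  rw [hP.totalDegree hFQ, hF.totalDegree hF0] at htotal
  lia

lemma finrank_multiplesInDegree_binary {F : MvPolynomial (Fin 2) K} {a : ℕ}
    (hF : F.IsHomogeneous a) (hF0 : F ≠ 0) (n : ℕ) :
    finrank K (multiplesInDegree F n) = n + 1 - a := by
  obtain hna | hna := lt_or_ge n a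
  · rw [multiplesInDegree_eq_bot hF hna, finrank_bot]
    lia
  · obtain ⟨m, rfl⟩ := Nat.exists_eq_add_of_le hna
    rw [finrank_multiplesInDegree_add hF hF0, finrank_binaryForms]
    lia

/-- The formula also holds for `n = a - 1` and `n = a - 2`, where both sides vanish. -/
lemma two_mul_finrank_multiplesInDegree_ternary {F : MvPolynomial (Fin 3) K} {a n : ℕ}
    (hF : F.IsHomogeneous a) (hF0 : F ≠ 0) (han : a ≤ n + 2) :
    (2 * finrank K (multiplesInDegree F n) : ℤ) = (n - a + 2) * (n - a + 1) := by
  obtain hna | hna := lt_or_ge n a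
  · rw [multiplesInDegree_eq_bot hF hna, finrank_bot]
    obtain rfl | rfl : a = n + 1 ∨ a = n + 2 := by lia
    all_goals push_cast; ring
  · obtain ⟨m, rfl⟩ := Nat.exists_eq_add_of_le hna
    rw [finrank_multiplesInDegree_add hF hF0]
    have hm := two_mul_finrank_ternaryForms (K := K) m
    zify at hm
    push_cast
    linear_combination hm

lemma multiplesInDegree_inf {F G : MvPolynomial σ K} (hFG : IsRelPrime F G) (n : ℕ) :
    multiplesInDegree F n ⊓ multiplesInDegree G n = multiplesInDegree (F * G) n := by
  ext P
  simp only [Submodule.mem_inf, mem_multiplesInDegree]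
  constructor
  · rintro ⟨⟨hP, hFP⟩, -, hGP⟩
    exact ⟨hP, hFG.mul_dvd hFP hGP⟩
  · rintro ⟨hP, hFGP⟩
    exact ⟨⟨hP, (dvd_mul_right F G).trans hFGP⟩, hP, (dvd_mul_left G F).trans hFGP⟩

lemma finrank_multiplesInDegree_sup [Finite σ] {F G : MvPolynomial σ K} (hFG : IsRelPrime F G)
    (n : ℕ) :
    finrank K ↥(multiplesInDegree F n ⊔ multiplesInDegree G n) +
        finrank K (multiplesInDegree (F * G) n) =
      finrank K (multiplesInDegree F n) + finrank K (multiplesInDegree G n) := by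
  rw [← multiplesInDegree_inf hFG, Submodule.finrank_sup_add_finrank_inf_eq]

lemma multiplesInDegree_sup_le_span (F G : MvPolynomial σ K) (n : ℕ) :
    multiplesInDegree F n ⊔ multiplesInDegree G n ≤
      (Ideal.span {F, G}).restrictScalars K :=
  sup_le (inf_le_right.trans (Ideal.span_mono (by simp)))
    (inf_le_right.trans (Ideal.span_mono (by simp)))

lemma binaryForm_mem_multiplesInDegree_sup {F G : MvPolynomial (Fin 2) K} {a b n : ℕ}
    (hF : F.IsHomogeneous a) (hF0 : F ≠ 0) (hG : G.IsHomogeneous b) (hFG : IsRelPrime F G)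
    (hn : a + b ≤ n + 1) {P : MvPolynomial (Fin 2) K} (hP : P.IsHomogeneous n) :
    P ∈ multiplesInDegree F n ⊔ multiplesInDegree G n := by
  obtain rfl | hG0 := eq_or_ne G 0
  · have hunit : IsUnit F := isRelPrime_zero_right.mp hFG
    exact Submodule.mem_sup_left (mem_multiplesInDegree.mpr ⟨hP, hunit.dvd⟩)
  have htop : multiplesInDegree F n ⊔ multiplesInDegree G n = homogeneousSubmodule (Fin 2) K n := by
    refine Submodule.eq_of_le_of_finrank_le
      (sup_le (multiplesInDegree_le F n) (multiplesInDegree_le G n)) ?_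
    have hsup := finrank_multiplesInDegree_sup hFG n
    rw [finrank_multiplesInDegree_binary hF hF0, finrank_multiplesInDegree_binary hG hG0,
      finrank_multiplesInDegree_binary (hF.mul hG) (mul_ne_zero hF0 hG0)] at hsup
    rw [finrank_binaryForms]
    lia
  exact htop ▸ hP

/-- The pencil `S` contributes `n + 1` dimensions in degree `n`, while `(F, G)` has bounded
codimension there; for `n = a + b + a * b` the two subspaces must meet. -/
lemma exists_binaryForm_map_mem_span {F G : MvPolynomial (Fin 3) K} {a b : ℕ}
    (hF : F.IsHomogeneous a) (hF0 : F ≠ 0) (hG : G.IsHomogeneous b) (hG0 : G ≠ 0)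
    (hFG : IsRelPrime F G) {S : MvPolynomial (Fin 2) K →ₐ[K] MvPolynomial (Fin 3) K}
    (hS : Function.Injective S) (hShom : ∀ P n, P.IsHomogeneous n → (S P).IsHomogeneous n) :
    ∃ n r, r.IsHomogeneous n ∧ r ≠ 0 ∧ S r ∈ Ideal.span {F, G} := by
  set n := a + b + a * b with hn
  set V := (homogeneousSubmodule (Fin 2) K n).map S.toLinearMap with hV
  set W := multiplesInDegree F n ⊔ multiplesInDegree G n with hW
  have hVdim : finrank K V = n + 1 := by
    rw [← finrank_binaryForms (K := K),
      (Submodule.equivMapOfInjective S.toLinearMap hS _).finrank_eq]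
  have hWdim := finrank_multiplesInDegree_sup hFG n
  have hFdim := two_mul_finrank_multiplesInDegree_ternary (n := n) hF hF0 (by lia)
  have hGdim := two_mul_finrank_multiplesInDegree_ternary (n := n) hG hG0 (by lia)
  have hFGdim := two_mul_finrank_multiplesInDegree_ternary (n := n) (hF.mul hG)
    (mul_ne_zero hF0 hG0) (by lia)
  have htotal := two_mul_finrank_ternaryForms (K := K) n
  have hle : V ⊔ W ≤ homogeneousSubmodule (Fin 3) K n := by
    refine sup_le ?_ (sup_le (multiplesInDegree_le F n) (multiplesInDegree_le G n))
    rintro _ ⟨P, hP, rfl⟩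
    exact hShom P n hP
  have hVW : V ⊓ W ≠ ⊥ := by
    intro hbot
    have hdim := Submodule.finrank_sup_add_finrank_inf_eq V W
    have hdim_le := Submodule.finrank_mono hle
    rw [hbot, finrank_bot] at hdim
    zify at hWdim hdim hdim_le htotal hVdim
    push_cast [hn] at *
    linarith
  obtain ⟨_, ⟨⟨r, hr, rfl⟩, hSr⟩, hSr0⟩ := Submodule.exists_mem_ne_zero_of_ne_bot hVW
  exact ⟨n, r, hr, by rintro rfl; exact hSr0 (map_zero _), multiplesInDegree_sup_le_span F G n hSr⟩

end Dimensions

section LineRestriction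

variable {K : Type*} [Field K]

/-- Restriction of ternary forms to the line `x₂ = α x₀ + w x₁`, with coordinates `x₀, x₁`. -/
def restrictToLine (α w : K) : MvPolynomial (Fin 3) K →ₐ[K] MvPolynomial (Fin 2) K :=
  aeval ![X 0, X 1, C α * X 0 + C w * X 1]

/-- The linear form cutting out the line `x₂ = α x₀ + w x₁`. -/
def lineForm (α w : K) : MvPolynomial (Fin 3) K :=
  X 2 - (C α * X 0 + C w * X 1)

variable (α w : K)

lemma isHomogeneous_lineForm : (lineForm α w).IsHomogeneous 1 :=
  (isHomogeneous_X K 2).sub ((isHomogeneous_C_mul_X α 0).add (isHomogeneous_C_mul_X w 1))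

lemma lineForm_ne_zero : lineForm α w ≠ 0 := by
  intro h
  simpa [lineForm] using congrArg (eval ![0, 0, 1]) h

lemma isHomogeneous_restrictToLine {P : MvPolynomial (Fin 3) K} {n : ℕ}
    (hP : P.IsHomogeneous n) : (restrictToLine α w P).IsHomogeneous n := by
  rw [← one_mul n]
  refine hP.aeval _ fun i ↦ ?_
  fin_cases i
  · exact isHomogeneous_X K 0
  · exact isHomogeneous_X K 1
  · exact (isHomogeneous_C_mul_X α 0).add (isHomogeneous_C_mul_X w 1)

lemma restrictToLine_rename (P : MvPolynomial (Fin 2) K) :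
    restrictToLine α w (rename Fin.castSucc P) = P := by
  suffices (restrictToLine α w).comp (rename Fin.castSucc) = AlgHom.id K _ from
    DFunLike.congr_fun this P
  ext i
  fin_cases i <;> simp [restrictToLine]

lemma lineForm_dvd_sub_rename_restrictToLine (P : MvPolynomial (Fin 3) K) :
    lineForm α w ∣ P - rename Fin.castSucc (restrictToLine α w P) := by
  rw [← Ideal.mem_span_singleton, ← Ideal.Quotient.mk_eq_mk_iff_sub_mem]
  set π := Ideal.Quotient.mkₐ K (Ideal.span {lineForm α w})
  suffices π = (π.comp (rename Fin.castSucc)).comp (restrictToLine α w) from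
    DFunLike.congr_fun this P
  ext i
  fin_cases i
  · simp [restrictToLine]
  · simp [restrictToLine]
  · refine Ideal.Quotient.mk_eq_mk_iff_sub_mem _ _ |>.mpr ?_
    simp [restrictToLine, lineForm]

lemma lineForm_dvd_of_restrictToLine_eq_zero {P : MvPolynomial (Fin 3) K}
    (hP : restrictToLine α w P = 0) : lineForm α w ∣ P := by
  simpa only [hP, map_zero, sub_zero] using lineForm_dvd_sub_rename_restrictToLine α w P

lemma exists_mem_multiplesInDegree_restrictToLine_eq {F : MvPolynomial (Fin 3) K} {a m : ℕ}
    (hF : F.IsHomogeneous a) {A : MvPolynomial (Fin 2) K}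
    (hA : A ∈ multiplesInDegree (restrictToLine α w F) m) :
    ∃ A' ∈ multiplesInDegree F m, restrictToLine α w A' = A := by
  obtain ⟨hA, U, rfl⟩ := mem_multiplesInDegree.mp hA
  by_cases hFU : restrictToLine α w F * U = 0
  · exact ⟨0, zero_mem _, by rw [hFU, map_zero]⟩
  obtain ⟨j, hU⟩ := exists_isHomogeneous_of_dvd hA hFU (dvd_mul_left U _)
  have hm : m = a + j := hA.inj_right ((isHomogeneous_restrictToLine α w hF).mul hU) hFU
  refine ⟨F * rename Fin.castSucc U, mem_multiplesInDegree.mpr ⟨?_, dvd_mul_right F _⟩, ?_⟩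
  · exact hm ▸ hF.mul hU.rename_isHomogeneous
  · rw [map_mul, restrictToLine_rename]

lemma irreducible_X_one_sub_C_mul_X_zero (u : K) :
    Irreducible (X 1 - C u * X 0 : MvPolynomial (Fin 2) K) := by
  have hcoeff : coeff (Finsupp.single 1 1) (X 1 - C u * X 0 : MvPolynomial (Fin 2) K) = 1 := by
    simp [coeff_C_mul, coeff_X, Finsupp.single_left_inj]
  refine irreducible_of_totalDegree_eq_one ?_ fun x hx ↦ isUnit_of_dvd_one (hcoeff ▸ hx _)
  refine ((isHomogeneous_X K 1).sub (isHomogeneous_C_mul_X u 0)).totalDegree fun h ↦ ?_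
  simp [h] at hcoeff

/-- The pencil of lines through `(1 : u : v)`, as a substitution. -/
def pencilHom (u v : K) : MvPolynomial (Fin 2) K →ₐ[K] MvPolynomial (Fin 3) K :=
  aeval ![X 1 - C u * X 0, X 2 - C v * X 0]

lemma pencilHom_injective (u v : K) : Function.Injective (pencilHom u v) := by
  have hinv : (aeval ![0, X 0, X 1]).comp (pencilHom u v) =
      AlgHom.id K (MvPolynomial (Fin 2) K) := by
    ext i
    fin_cases i <;> simp [pencilHom]
  exact Function.LeftInverse.injective (g := aeval ![0, X 0, X 1]) (DFunLike.congr_fun hinv)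

lemma isHomogeneous_pencilHom (u v : K) {P : MvPolynomial (Fin 2) K} {n : ℕ}
    (hP : P.IsHomogeneous n) : (pencilHom u v P).IsHomogeneous n := by
  rw [← one_mul n]
  refine hP.aeval _ fun i ↦ ?_
  fin_cases i
  · exact (isHomogeneous_X K 1).sub (isHomogeneous_C_mul_X u 0)
  · exact (isHomogeneous_X K 2).sub (isHomogeneous_C_mul_X v 0)

/-- On the line of slope `w` through `(1 : u : v)`, every form of the pencil is a multiple of a
power of the form vanishing at the centre. -/
lemma restrictToLine_pencilHom (u v : K) {r : MvPolynomial (Fin 2) K} {n : ℕ}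
    (hr : r.IsHomogeneous n) :
    restrictToLine (v - w * u) w (pencilHom u v r) =
      (X 1 - C u * X 0) ^ n * C (eval ![1, w] r) := by
  have hcomp : (restrictToLine (v - w * u) w).comp (pencilHom u v) =
      aeval ((X 1 - C u * X 0 : MvPolynomial (Fin 2) K) • fun i ↦ C (![1, w] i)) := by
    ext1 i
    fin_cases i
    · simp [restrictToLine, pencilHom]
    · simp [restrictToLine, pencilHom]
      ring
  rw [← AlgHom.comp_apply, hcomp, aeval_smul_of_isHomogeneous hr]
  congr 1
  exact aeval_algebraMap_apply (MvPolynomial (Fin 2) K) ![1, w] r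

lemma eval_restrictToLine_center (u v : K) (F : MvPolynomial (Fin 3) K) :
    eval ![1, u] (restrictToLine (v - w * u) w F) = eval ![1, u, v] F := by
  suffices (aeval (R := K) ![1, u]).comp (restrictToLine (v - w * u) w) = aeval ![1, u, v] from
    DFunLike.congr_fun this F
  ext i
  fin_cases i <;> simp [restrictToLine]

lemma exists_restrictToLine_isRelPrime [Infinite K] {F G : MvPolynomial (Fin 3) K} {a b : ℕ}
    (hF : F.IsHomogeneous a) (hF0 : F ≠ 0) (hG : G.IsHomogeneous b) (hG0 : G ≠ 0)
    (hFG : IsRelPrime F G) :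
    ∃ α w : K, restrictToLine α w F ≠ 0 ∧
      IsRelPrime (restrictToLine α w F) (restrictToLine α w G) := by
  obtain ⟨c, hc, hFc⟩ := exists_apply_eq_one_and_eval_ne_zero hF hF0 0
  obtain ⟨n, r, hr, hr0, hSr⟩ := exists_binaryForm_map_mem_span hF hF0 hG hG0 hFG
    (pencilHom_injective (c 1) (c 2)) fun P n ↦ isHomogeneous_pencilHom (c 1) (c 2)
  obtain ⟨s, hs, hrs⟩ := exists_apply_eq_one_and_eval_ne_zero hr hr0 0
  set ρ := restrictToLine (c 2 - s 1 * c 1) (s 1)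
  have hFcenter : eval ![1, c 1] (ρ F) ≠ 0 := by
    rw [eval_restrictToLine_center]
    convert hFc
    ext i
    fin_cases i <;> simp [hc]
  have hcoprime : IsRelPrime (ρ F) ((X 1 - C (c 1) * X 0) ^ n) := by
    refine IsRelPrime.pow_right ?_
    refine ((irreducible_X_one_sub_C_mul_X_zero (c 1)).isRelPrime_iff_not_dvd.mpr ?_).symm
    rintro ⟨Q, hQ⟩
    exact hFcenter (by simp [hQ])
  refine ⟨_, _, fun h ↦ hFcenter (by rw [h, map_zero]), fun D hDF hDG ↦ hcoprime hDF ?_⟩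
  obtain ⟨A, B, hAB⟩ := Ideal.mem_span_pair.mp hSr
  have hD : D ∣ ρ (pencilHom (c 1) (c 2) r) := by
    rw [← hAB, map_add, map_mul, map_mul]
    exact dvd_add (hDF.mul_left _) (hDG.mul_left _)
  have hs' : ![1, s 1] = s := by
    ext i
    fin_cases i <;> simp [hs]
  rw [restrictToLine_pencilHom _ _ _ hr, hs'] at hD
  exact ((hrs.isUnit.map C).dvd_mul_right).mp hD

/-- Multiplication by `L` is surjective on the graded quotient by `I` from degree `e` upwards. -/
def IsMulSurjectiveFrom (I : Ideal (MvPolynomial (Fin 3) K)) (L : MvPolynomial (Fin 3) K) (e : ℕ) :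
    Prop :=
  ∀ n ≥ e, ∀ P : MvPolynomial (Fin 3) K, P.IsHomogeneous (n + 1) →
    ∃ Q : MvPolynomial (Fin 3) K, Q.IsHomogeneous n ∧ P - L * Q ∈ I

lemma exists_isMulSurjectiveFrom [Infinite K] {F G : MvPolynomial (Fin 3) K} {a b e : ℕ}
    (hF : F.IsHomogeneous a) (hF0 : F ≠ 0) (hG : G.IsHomogeneous b) (hG0 : G ≠ 0)
    (hFG : IsRelPrime F G) (he : a + b ≤ e + 2) :
    ∃ L : MvPolynomial (Fin 3) K, IsMulSurjectiveFrom (Ideal.span {F, G}) L e := by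
  obtain ⟨α, w, hρF, hρFG⟩ := exists_restrictToLine_isRelPrime hF hF0 hG hG0 hFG
  refine ⟨lineForm α w, fun n hn P hP ↦ ?_⟩
  obtain ⟨A, hA, B, hB, hAB⟩ := Submodule.mem_sup.mp <|
    binaryForm_mem_multiplesInDegree_sup (isHomogeneous_restrictToLine α w hF) hρF
      (isHomogeneous_restrictToLine α w hG) hρFG (by lia) (isHomogeneous_restrictToLine α w hP)
  obtain ⟨A', hA', rfl⟩ := exists_mem_multiplesInDegree_restrictToLine_eq α w hF hA
  obtain ⟨B', hB', rfl⟩ := exists_mem_multiplesInDegree_restrictToLine_eq α w hG hB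
  obtain ⟨Q, hQ⟩ : lineForm α w ∣ P - (A' + B') :=
    lineForm_dvd_of_restrictToLine_eq_zero α w (by rw [map_sub, map_add, hAB, sub_self])
  have hsub : (P - (A' + B')).IsHomogeneous (1 + n) := by
    rw [add_comm 1 n]
    exact hP.sub ((multiplesInDegree_le F _ hA').add (multiplesInDegree_le G _ hB'))
  refine ⟨Q, isHomogeneous_right_of_mul (isHomogeneous_lineForm α w) (lineForm_ne_zero α w)
    (hQ ▸ hsub), ?_⟩
  rw [← hQ, sub_sub_cancel]
  exact multiplesInDegree_sup_le_span F G _ (Submodule.add_mem_sup hA' hB')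

end LineRestriction

section EvaluationRelations

open scoped LinearAlgebra.Projectivization

variable {σ ι K : Type*} [Field K]

lemma exists_linearForm_separating {p q : ℙ K (σ → K)} (hpq : p ≠ q) :
    ∃ L : MvPolynomial σ K, L.IsHomogeneous 1 ∧ eval p.rep L ≠ 0 ∧ eval q.rep L = 0 := by
  obtain ⟨j, hj⟩ := Function.ne_iff.mp q.rep_nonzero
  rw [Pi.zero_apply] at hj
  have hminor : ∃ i, q.rep j * p.rep i - q.rep i * p.rep j ≠ 0 := by
    by_contra! h
    refine hpq ?_
    rw [← p.mk_rep, ← q.mk_rep, Projectivization.mk_eq_mk_iff']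
    refine ⟨p.rep j / q.rep j, funext fun i ↦ ?_⟩
    rw [Pi.smul_apply, smul_eq_mul]
    field_simp
    linear_combination -h i
  obtain ⟨i, hi⟩ := hminor
  refine ⟨C (q.rep j) * X i - C (q.rep i) * X j,
    (isHomogeneous_C_mul_X _ i).sub (isHomogeneous_C_mul_X _ j), ?_, ?_⟩
  · simpa using hi
  · simp [mul_comm]

lemma exists_form_separating [Fintype ι] {p : ι → ℙ K (σ → K)} (hp : Function.Injective p)
    (i : ι) {n : ℕ} (hn : Fintype.card ι ≤ n + 1) :
    ∃ P : MvPolynomial σ K,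
      P.IsHomogeneous n ∧ eval (p i).rep P ≠ 0 ∧ ∀ j ≠ i, eval (p j).rep P = 0 := by
  classical
  obtain ⟨k, hk⟩ := Function.ne_iff.mp (p i).rep_nonzero
  have hsep (j : ι) (hj : j ≠ i) := exists_linearForm_separating (hp.ne hj.symm)
  choose! L hLhom hLi hLj using hsep
  refine ⟨(∏ j ∈ Finset.univ.erase i, L j) * X k ^ (n + 1 - Fintype.card ι), ?_, ?_, ?_⟩
  · have hprod := IsHomogeneous.prod (Finset.univ.erase i) L (fun _ ↦ 1)
      fun j hj ↦ hLhom j (Finset.ne_of_mem_erase hj)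
    rw [Finset.sum_const, Finset.card_erase_of_mem (Finset.mem_univ i), Finset.card_univ] at hprod
    convert hprod.mul (isHomogeneous_X_pow k (n + 1 - Fintype.card ι)) using 1
    have := Fintype.card_pos_iff.mpr ⟨i⟩
    rw [smul_eq_mul, mul_one]
    lia
  · rw [map_mul, map_pow, eval_X, map_prod]
    refine mul_ne_zero (Finset.prod_ne_zero_iff.mpr fun j hj ↦ ?_) (pow_ne_zero _ hk)
    exact hLi j (Finset.ne_of_mem_erase hj)
  · intro j hj
    rw [map_mul, map_prod,
      Finset.prod_eq_zero (Finset.mem_erase.mpr ⟨hj, Finset.mem_univ j⟩) (hLj j hj), zero_mul]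

/-- Evaluation at the chosen representatives of the points `p i`. -/
def evalAt (p : ι → ℙ K (σ → K)) : MvPolynomial σ K →ₗ[K] ι → K :=
  LinearMap.pi fun i ↦ (aeval (p i).rep).toLinearMap

lemma evalAt_apply (p : ι → ℙ K (σ → K)) (P : MvPolynomial σ K) (i : ι) :
    evalAt p P i = eval (p i).rep P :=
  rfl

/-- The forms of degree `n` vanishing at all the points `p i`. -/
def formsThrough (p : ι → ℙ K (σ → K)) (n : ℕ) : Submodule K (MvPolynomial σ K) :=
  homogeneousSubmodule σ K n ⊓ LinearMap.ker (evalAt p)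

lemma mem_formsThrough {p : ι → ℙ K (σ → K)} {n : ℕ} {P : MvPolynomial σ K} :
    P ∈ formsThrough p n ↔ P.IsHomogeneous n ∧ ∀ i, eval (p i).rep P = 0 := by
  rw [formsThrough, Submodule.mem_inf, mem_homogeneousSubmodule, LinearMap.mem_ker, funext_iff]
  rfl

/-- The coefficients `l` form a linear relation between the evaluations of forms of degree `d` at
the points `p i`. -/
def IsEvalRelation [Fintype ι] (p : ι → ℙ K (σ → K)) (l : ι → K) (d : ℕ) : Prop :=
  ∀ P : MvPolynomial σ K, P.IsHomogeneous d → ∑ i, l i * eval (p i).rep P = 0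

lemma IsEvalRelation.residual [Fintype ι] {p : ι → ℙ K (σ → K)} {l : ι → K}
    {H : MvPolynomial σ K} {k e : ℕ} (hH : H.IsHomogeneous k) (hl : IsEvalRelation p l (k + e))
    [Fintype {i // eval (p i).rep H ≠ 0}] :
    IsEvalRelation (fun i : {i // eval (p i).rep H ≠ 0} ↦ p i)
      (fun i ↦ l i * eval (p i).rep H) e := by
  intro P hP
  refine (Fintype.sum_of_injective _ Subtype.val_injective _ _ (fun i hi ↦ ?_) fun i ↦ ?_).trans
    (hl (H * P) (hH.mul hP))
  · have hHi : eval (p i).rep H = 0 := by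
      by_contra h
      exact hi ⟨⟨i, h⟩, rfl⟩
    rw [map_mul, hHi, zero_mul, mul_zero]
  · rw [map_mul, mul_assoc]

variable {p : ι → ℙ K (Fin 3 → K)}

lemma IsMulSurjectiveFrom.exists_eval_eq_pow_mul {I : Ideal (MvPolynomial (Fin 3) K)}
    {L : MvPolynomial (Fin 3) K} {e : ℕ} (hL : IsMulSurjectiveFrom I L e)
    (hI : ∀ P ∈ I, ∀ i, eval (p i).rep P = 0) (k : ℕ) {P : MvPolynomial (Fin 3) K}
    (hP : P.IsHomogeneous (e + k)) :
    ∃ Q : MvPolynomial (Fin 3) K, Q.IsHomogeneous e ∧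
      ∀ i, eval (p i).rep P = eval (p i).rep L ^ k * eval (p i).rep Q := by
  induction k generalizing P with
  | zero => exact ⟨P, hP, fun i ↦ by rw [pow_zero, one_mul]⟩
  | succ k ih =>
    obtain ⟨Q, hQ, hPQ⟩ := hL (e + k) (Nat.le_add_right e k) P hP
    obtain ⟨R, hR, hQR⟩ := ih hQ
    refine ⟨R, hR, fun i ↦ ?_⟩
    have hPi : eval (p i).rep P = eval (p i).rep L * eval (p i).rep Q := by
      simpa only [map_sub, map_mul, sub_eq_zero] using hI _ hPQ i
    rw [hPi, hQR i, pow_succ', mul_assoc]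

/-- Dividing separating forms of high degree by powers of `L` gives separating forms of
degree `e`. -/
lemma IsEvalRelation.eq_zero_of_isMulSurjectiveFrom [Fintype ι] (hp : Function.Injective p)
    {I : Ideal (MvPolynomial (Fin 3) K)} {L : MvPolynomial (Fin 3) K} {e : ℕ}
    (hL : IsMulSurjectiveFrom I L e) (hI : ∀ P ∈ I, ∀ i, eval (p i).rep P = 0) {l : ι → K}
    (hl : IsEvalRelation p l e) : l = 0 := by
  have hsep (i : ι) : ∃ Q : MvPolynomial (Fin 3) K, Q.IsHomogeneous e ∧
      eval (p i).rep L ^ Fintype.card ι * eval (p i).rep Q ≠ 0 ∧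
      ∀ j ≠ i, eval (p j).rep L ^ Fintype.card ι * eval (p j).rep Q = 0 := by
    obtain ⟨P, hP, hPi, hPj⟩ := exists_form_separating hp i (n := e + Fintype.card ι) (by lia)
    obtain ⟨Q, hQ, hPQ⟩ := hL.exists_eval_eq_pow_mul hI _ hP
    exact ⟨Q, hQ, hPQ i ▸ hPi, fun j hj ↦ hPQ j ▸ hPj j hj⟩
  have hLne (i : ι) : eval (p i).rep L ^ Fintype.card ι ≠ 0 := by
    obtain ⟨Q, -, hQi, -⟩ := hsep i
    exact left_ne_zero_of_mul hQi
  funext i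
  obtain ⟨Q, hQ, hQi, hQj⟩ := hsep i
  have hrel := hl Q hQ
  rw [Fintype.sum_eq_single i fun j hj ↦ by
    rw [(mul_eq_zero.mp (hQj j hj)).resolve_left (hLne j), mul_zero]] at hrel
  exact (mul_eq_zero.mp hrel).resolve_right (right_ne_zero_of_mul hQi)

variable [Infinite K]

lemma IsEvalRelation.eq_zero_of_isRelPrime [Fintype ι] (hp : Function.Injective p)
    {F G : MvPolynomial (Fin 3) K} {a b e : ℕ} (hF : F.IsHomogeneous a) (hF0 : F ≠ 0)
    (hG : G.IsHomogeneous b) (hG0 : G ≠ 0) (hFG : IsRelPrime F G)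
    (hFp : ∀ i, eval (p i).rep F = 0) (hGp : ∀ i, eval (p i).rep G = 0) (he : a + b ≤ e + 2)
    {l : ι → K} (hl : IsEvalRelation p l e) : l = 0 := by
  obtain ⟨L, hL⟩ := exists_isMulSurjectiveFrom hF hF0 hG hG0 hFG he
  refine hl.eq_zero_of_isMulSurjectiveFrom hp hL fun P hP i ↦ ?_
  obtain ⟨A, B, rfl⟩ := Ideal.mem_span_pair.mp hP
  rw [map_add, map_mul, map_mul, hFp, hGp, mul_zero, mul_zero, add_zero]

/-- At the points off `H = 0` the coprime forms `F` and `G` vanish, which leaves no room for the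
residual relation. -/
lemma IsEvalRelation.eval_commonFactor_eq_zero [Fintype ι] (hp : Function.Injective p)
    {l : ι → K} (hl0 : ∀ i, l i ≠ 0) {F G H : MvPolynomial (Fin 3) K} {a b k e : ℕ}
    (hl : IsEvalRelation p l (k + e)) (hH : H.IsHomogeneous k) (hF : F.IsHomogeneous a)
    (hF0 : F ≠ 0) (hG : G.IsHomogeneous b) (hG0 : G ≠ 0) (hFG : IsRelPrime F G)
    (hFp : ∀ i, eval (p i).rep (H * F) = 0) (hGp : ∀ i, eval (p i).rep (H * G) = 0)
    (he : a + b ≤ e + 2) (i : ι) : eval (p i).rep H = 0 := by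
  classical
  by_contra hi
  have hzero := (hl.residual hH).eq_zero_of_isRelPrime (hp.comp Subtype.val_injective) hF hF0 hG
    hG0 hFG (fun j ↦ (mul_eq_zero.mp (map_mul (eval _) H F ▸ hFp j)).resolve_left j.2)
    (fun j ↦ (mul_eq_zero.mp (map_mul (eval _) H G ▸ hGp j)).resolve_left j.2) he
  exact absurd (congrFun hzero ⟨i, hi⟩) (mul_ne_zero (hl0 i) hi)

lemma IsEvalRelation.formsThrough_le_multiplesInDegree [Fintype ι] (hp : Function.Injective p)
    {l : ι → K} (hl0 : ∀ i, l i ≠ 0) {d t n : ℕ} (hl : IsEvalRelation p l d) (htn : t + n ≤ d + 2)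
    {F : MvPolynomial (Fin 3) K} (hF : F ∈ formsThrough p t) (hF0 : F ≠ 0)
    (hmin : ∀ k < t, formsThrough p k = ⊥) : formsThrough p n ≤ multiplesInDegree F n := by
  intro G hG
  obtain ⟨hF, hFp⟩ := mem_formsThrough.mp hF
  obtain ⟨hG, hGp⟩ := mem_formsThrough.mp hG
  refine mem_multiplesInDegree.mpr ⟨hG, ?_⟩
  obtain rfl | hG0 := eq_or_ne G 0
  · exact dvd_zero F
  obtain ⟨F', G', H, hFG', rfl, rfl⟩ := UniqueFactorizationMonoid.exists_reduced_factors F hF0 G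
  have hH0 := left_ne_zero_of_mul hF0
  have hF'0 := right_ne_zero_of_mul hF0
  obtain ⟨k, hH⟩ := exists_isHomogeneous_of_mul hF hF0
  obtain ⟨a, hF'⟩ := exists_isHomogeneous_of_dvd hF hF0 (dvd_mul_left F' H)
  obtain ⟨b, hG'⟩ := exists_isHomogeneous_of_dvd hG hG0 (dvd_mul_left G' H)
  have ht : t = k + a := hF.inj_right (hH.mul hF') hF0
  have hn : n = k + b := hG.inj_right (hH.mul hG') hG0
  obtain rfl | ha := eq_or_ne a 0
  · exact (isUnit_of_isHomogeneous_zero hF' hF'0).mul_right_dvd.mpr (dvd_mul_right H G')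
  obtain ⟨e, rfl⟩ : ∃ e, d = k + e := Nat.exists_eq_add_of_le (by lia)
  have hHp := hl.eval_commonFactor_eq_zero hp hl0 hH hF' hF'0 hG' (right_ne_zero_of_mul hG0) hFG'
    hFp hGp (by lia)
  have hH_mem : H ∈ formsThrough p k := mem_formsThrough.mpr ⟨hH, hHp⟩
  rw [hmin k (by lia), Submodule.mem_bot] at hH_mem
  exact absurd hH_mem hH0

end EvaluationRelations

section HilbertFunction

open Module
open scoped LinearAlgebra.Projectivization

variable {σ ι K : Type*} [Field K]

lemma finrank_add_finrank_le_card_of_sum_eq_zero [Fintype ι] {A B : Submodule K (ι → K)}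
    {l : ι → K} (hl0 : ∀ i, l i ≠ 0) (hl : ∀ a ∈ A, ∀ b ∈ B, ∑ i, l i * (a i * b i) = 0) :
    finrank K A + finrank K B ≤ Fintype.card ι := by
  classical
  set φ : (ι → K) →ₗ[K] Dual K (ι → K) :=
    (dotProductEquiv K ι).toLinearMap ∘ₗ LinearMap.mulLeft K l
  have hφ : Function.Injective φ := by
    refine (dotProductEquiv K ι).injective.comp fun a b hab ↦ funext fun i ↦ ?_
    exact mul_left_cancel₀ (hl0 i) (congrFun hab i)
  have hle : A.map φ ≤ B.dualAnnihilator := by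
    rintro _ ⟨a, ha, rfl⟩
    refine (Submodule.mem_dualAnnihilator _).mpr fun b hb ↦ ?_
    rw [← hl a ha b hb]
    exact Finset.sum_congr rfl fun i _ ↦ mul_assoc _ _ _
  calc finrank K A + finrank K B
      = finrank K B + finrank K (A.map φ) := by
        rw [add_comm, (Submodule.equivMapOfInjective φ hφ A).finrank_eq]
    _ ≤ finrank K B + finrank K B.dualAnnihilator := by gcongr; exact Submodule.finrank_mono hle
    _ = Fintype.card ι := by
        rw [Subspace.finrank_add_finrank_dualAnnihilator_eq, finrank_fintype_fun_eq_card]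

/-- The Hilbert function of the points `p i`: the number of conditions which they impose on forms
of degree `n`. -/
def hilbertFunction (p : ι → ℙ K (σ → K)) (n : ℕ) : ℕ :=
  finrank K ((homogeneousSubmodule σ K n).map (evalAt p))

lemma hilbertFunction_le_card [Fintype ι] (p : ι → ℙ K (σ → K)) (n : ℕ) :
    hilbertFunction p n ≤ Fintype.card ι :=
  (Submodule.finrank_le _).trans_eq (finrank_fintype_fun_eq_card K)

lemma hilbertFunction_add_finrank_formsThrough [Finite σ] (p : ι → ℙ K (σ → K)) (n : ℕ) :
    hilbertFunction p n + finrank K (formsThrough p n) =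
      finrank K (homogeneousSubmodule σ K n) := by
  have hrank := LinearMap.finrank_range_add_finrank_ker
    ((evalAt p).domRestrict (homogeneousSubmodule σ K n))
  rwa [LinearMap.range_domRestrict, LinearMap.ker_domRestrict, ← Submodule.finrank_map_subtype_eq,
    Submodule.map_comap_subtype] at hrank

lemma IsEvalRelation.hilbertFunction_add_le_card [Fintype ι] {p : ι → ℙ K (σ → K)} {l : ι → K}
    (hl0 : ∀ i, l i ≠ 0) {m n : ℕ} (hl : IsEvalRelation p l (m + n)) :
    hilbertFunction p m + hilbertFunction p n ≤ Fintype.card ι := by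
  refine finrank_add_finrank_le_card_of_sum_eq_zero hl0 ?_
  rintro _ ⟨P, hP, rfl⟩ _ ⟨Q, hQ, rfl⟩
  simpa only [map_mul, ← evalAt_apply] using hl (P * Q) (hP.mul hQ)

lemma formsThrough_zero_eq_bot [Nonempty ι] (p : ι → ℙ K (σ → K)) : formsThrough p 0 = ⊥ := by
  rw [eq_bot_iff]
  intro P hP
  obtain ⟨hP, hPp⟩ := mem_formsThrough.mp hP
  have hPC := totalDegree_eq_zero_iff_eq_C.mp (Nat.le_zero.mp hP.totalDegree_le)
  have hcoeff := hPp (Classical.arbitrary ι)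
  rw [hPC, eval_C] at hcoeff
  rw [Submodule.mem_bot, hPC, hcoeff, C_0]

variable {p : ι → ℙ K (Fin 3 → K)}

lemma two_mul_hilbertFunction_of_formsThrough_eq_bot {n : ℕ} (hn : formsThrough p n = ⊥) :
    2 * hilbertFunction p n = (n + 2) * (n + 1) := by
  rw [← two_mul_finrank_ternaryForms (K := K), ← hilbertFunction_add_finrank_formsThrough p, hn,
    finrank_bot, add_zero]

lemma IsEvalRelation.mul_le_card_of_formsThrough_ne_bot [Infinite K] [Fintype ι]
    (hp : Function.Injective p) {l : ι → K} (hl0 : ∀ i, l i ≠ 0) {d t : ℕ}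
    (hl : IsEvalRelation p l d) (ht : 1 ≤ t) (htd : 2 * t ≤ d + 3)
    (hmin : ∀ k < t, formsThrough p k = ⊥) (hbot : formsThrough p t ≠ ⊥) :
    t * (d + 3 - t : ℤ) ≤ Fintype.card ι := by
  obtain ⟨F, hF, hF0⟩ := Submodule.exists_mem_ne_zero_of_ne_bot hbot
  obtain ⟨m, rfl⟩ := Nat.exists_eq_add_of_le' ht
  obtain ⟨n, rfl⟩ : ∃ n, d = m + n := Nat.exists_eq_add_of_le (by lia)
  have hcard := hl.hilbertFunction_add_le_card hl0
  have hm := two_mul_hilbertFunction_of_formsThrough_eq_bot (hmin m (by lia))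
  have hn := hilbertFunction_add_finrank_formsThrough p n
  have hFn := Submodule.finrank_mono <|
    hl.formsThrough_le_multiplesInDegree hp hl0 (n := n) (by lia) hF hF0 hmin
  have hmult := two_mul_finrank_multiplesInDegree_ternary (n := n) (mem_formsThrough.mp hF).1 hF0
    (by lia)
  have htotal := two_mul_finrank_ternaryForms (K := K) n
  zify at hcard hm hn hFn htotal
  push_cast at *
  linarith

lemma IsEvalRelation.add_le_two_mul_card [Fintype ι] {l : ι → K} (hl0 : ∀ i, l i ≠ 0) {m n : ℕ}
    (hl : IsEvalRelation p l (m + n)) (hm : formsThrough p m = ⊥) (hn : formsThrough p n = ⊥) :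
    (m + 2) * (m + 1) + (n + 2) * (n + 1) ≤ 2 * Fintype.card ι := by
  rw [← two_mul_hilbertFunction_of_formsThrough_eq_bot hm,
    ← two_mul_hilbertFunction_of_formsThrough_eq_bot hn, ← mul_add]
  exact Nat.mul_le_mul_left 2 (hl.hilbertFunction_add_le_card hl0)

lemma IsEvalRelation.le_card_of_formsThrough_eq_bot [Fintype ι]
    {l : ι → K} (hl0 : ∀ i, l i ≠ 0) {d : ℕ} (hl : IsEvalRelation p l d)
    (hbot : ∀ k, 2 * k ≤ d + 3 → formsThrough p k = ⊥) :
    d ^ 2 + 6 * d + 12 ≤ 4 * Fintype.card ι := by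
  obtain hd | hd := lt_or_ge d 2
  · have hcard := hilbertFunction_le_card p (d + 1)
    have hm := two_mul_hilbertFunction_of_formsThrough_eq_bot (hbot (d + 1) (by lia))
    interval_cases d <;> lia
  · obtain ⟨k, rfl | rfl⟩ : ∃ k, d = k + 2 + k ∨ d = k + 3 + k := ⟨(d - 2) / 2, by lia⟩
    · have hcard := hl.add_le_two_mul_card hl0 (hbot _ (by lia)) (hbot _ (by lia))
      nlinarith
    · have hcard := hl.add_le_two_mul_card hl0 (hbot _ (by lia)) (hbot _ (by lia))
      nlinarith

/-- A nonzero form of minimal degree through the points is a common factor of all forms of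
complementary degree through them; without such a form the Hilbert function is maximal. -/
theorem IsEvalRelation.exists_formsThrough_or_le_card [Infinite K] [Fintype ι] [Nonempty ι]
    (hp : Function.Injective p) {l : ι → K} (hl0 : ∀ i, l i ≠ 0) {d : ℕ}
    (hl : IsEvalRelation p l d) :
    (∃ t F, 1 ≤ t ∧ 2 * t ≤ d + 3 ∧ F ≠ 0 ∧ F ∈ formsThrough p t ∧
      t * (d + 3 - t : ℤ) ≤ Fintype.card ι) ∨ d ^ 2 + 6 * d + 12 ≤ 4 * Fintype.card ι := by
  classical
  by_cases! hbot : ∀ k, 2 * k ≤ d + 3 → formsThrough p k = ⊥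
  · exact Or.inr (hl.le_card_of_formsThrough_eq_bot hl0 hbot)
  left
  set t := Nat.find hbot
  obtain ⟨ht, htbot⟩ := Nat.find_spec hbot
  have hmin : ∀ k < t, formsThrough p k = ⊥ := by
    intro k hk
    have := Nat.find_min hbot hk
    by_contra h
    exact this ⟨by lia, h⟩
  have ht1 : 1 ≤ t := Nat.one_le_iff_ne_zero.mpr fun h ↦
    htbot (by rw [show Nat.find hbot = 0 from h]; exact formsThrough_zero_eq_bot p)
  obtain ⟨F, hF, hF0⟩ := Submodule.exists_mem_ne_zero_of_ne_bot htbot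
  exact ⟨t, F, ht1, ht, hF0, hF, hl.mul_le_card_of_formsThrough_ne_bot hp hl0 ht1 ht hmin htbot⟩

end HilbertFunction

section BasePoints

open scoped LinearAlgebra.Projectivization

variable {σ ι K : Type*} [Field K]

lemma option_elim_injective {α β : Type*} {g : α → β} (hg : Function.Injective g) {b : β}
    (hb : b ∉ Set.range g) : Function.Injective fun o : Option α ↦ o.elim b g := by
  rintro (_ | x) (_ | y) hxy
  · rfl
  · exact absurd ⟨y, hxy.symm⟩ hb
  · exact absurd ⟨x, hxy⟩ hb
  · exact congrArg some (hg hxy)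

lemma exists_isEvalRelation_of_basePoint [Finite ι] {p : ι → ℙ K (σ → K)} {q : ℙ K (σ → K)}
    {d : ℕ} (hq : ∀ F ∈ formsThrough p d, eval q.rep F = 0) :
    ∃ (s : Finset ι) (l : Option {i // i ∈ s} → K), (∀ o, l o ≠ 0) ∧
      IsEvalRelation (fun o : Option {i // i ∈ s} ↦ o.elim q fun i ↦ p i) l d := by
  classical
  have := Fintype.ofFinite ι
  set S := homogeneousSubmodule σ K d
  have hker : ⨅ i, LinearMap.ker ((aeval (R := K) (p i).rep).toLinearMap.domRestrict S) ≤
      LinearMap.ker ((aeval (R := K) q.rep).toLinearMap.domRestrict S) := by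
    intro F hF
    refine hq F (mem_formsThrough.mpr ⟨F.2, fun i ↦ ?_⟩)
    exact (Submodule.mem_iInf _).mp hF i
  obtain ⟨c, hc⟩ := Submodule.mem_span_range_iff_exists_fun K |>.mp
    (mem_span_of_iInf_ker_le_ker hker)
  refine ⟨Finset.univ.filter (c · ≠ 0), fun o ↦ o.elim (-1) fun i ↦ c i, ?_, fun F hF ↦ ?_⟩
  · rintro (_ | ⟨i, hi⟩)
    · exact neg_ne_zero.mpr one_ne_zero
    · exact (Finset.mem_filter.mp hi).2
  · have hcF : ∑ i, c i * eval (p i).rep F = eval q.rep F := by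
      simpa using DFunLike.congr_fun hc ⟨F, hF⟩
    have hsum : ∑ i : {i // i ∈ Finset.univ.filter (c · ≠ 0)}, c i * eval (p i).rep F =
        eval q.rep F := by
      rw [← hcF]
      refine Fintype.sum_of_injective _ Subtype.val_injective _ _ (fun i hi ↦ ?_) fun _ ↦ rfl
      have hci : c i = 0 := by simpa using hi
      rw [hci, zero_mul]
    simp only [Fintype.sum_option, Option.elim_none, Option.elim_some]
    rw [hsum, neg_one_mul, neg_add_cancel]

theorem stmt_2_general [Infinite K] [Finite ι] (Pt : ι → ℙ K (Fin 3 → K))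
    (hinj : Function.Injective Pt) (d : ℕ) (hcard : 6 * Nat.card ι ≤ d ^ 2 + 9 * d + 10)
    (hcurve : ∀ t : ℕ, 1 ≤ t → 2 * t ≤ d + 3 →
      ∀ C : MvPolynomial (Fin 3) K, C ≠ 0 → C.IsHomogeneous t →
        (({i : ι | eval (Pt i).rep C = 0}).ncard : ℤ) ≤ (t : ℤ) * ((d : ℤ) + 3 - (t : ℤ)) - 2) :
    ∀ Q : ℙ K (Fin 3 → K), Q ∉ Set.range Pt →
      ∃ F : MvPolynomial (Fin 3) K, F.IsHomogeneous d ∧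
        (∀ i : ι, eval (Pt i).rep F = 0) ∧ eval Q.rep F ≠ 0 := by
  intro Q hQ
  by_contra! hbase
  obtain ⟨s, l, hl0, hl⟩ := exists_isEvalRelation_of_basePoint (q := Q) (d := d) fun F hF ↦
    hbase F (mem_formsThrough.mp hF).1 (mem_formsThrough.mp hF).2
  have hs : s.card ≤ Nat.card ι := by
    rw [← Set.ncard_coe_finset, ← Set.ncard_univ]
    exact Set.ncard_le_ncard (Set.subset_univ _)
  have hsQ : Q ∉ Set.range fun i : {i // i ∈ s} ↦ Pt i := fun ⟨i, hi⟩ ↦ hQ ⟨i, hi⟩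
  obtain ⟨t, F, ht, htd, hF0, hF, hts⟩ | hds :=
    hl.exists_formsThrough_or_le_card
      (option_elim_injective (hinj.comp Subtype.val_injective) hsQ) hl0
  · obtain ⟨hFhom, hFp⟩ := mem_formsThrough.mp hF
    have hsub : (s : Set ι) ⊆ {i | eval (Pt i).rep F = 0} := fun i hi ↦ hFp (some ⟨i, hi⟩)
    have hle := Set.ncard_le_ncard hsub
    have hF_le := hcurve t ht htd F hF0 hFhom
    rw [Set.ncard_coe_finset] at hle
    rw [Fintype.card_option, Fintype.card_coe] at hts
    lia
  · rw [Fintype.card_option, Fintype.card_coe] at hds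
    nlinarith

end BasePoints

theorem stmt_2 (s : ℕ) (Pt : Fin s → ProjPt 2) (hinj : Function.Injective Pt)
    (d : ℕ) (hd : 3 ≤ d) (hcard : 6 * s ≤ d ^ 2 + 9 * d + 10)
    (hcurve : ∀ t : ℕ, 1 ≤ t → 2 * t ≤ d + 3 →
      ∀ C : MvPolynomial (Fin 3) ℂ, C ≠ 0 → C.IsHomogeneous t →
        (({i : Fin s | VanishesAt C (Pt i)}).ncard : ℤ)
          ≤ (t : ℤ) * ((d : ℤ) + 3 - (t : ℤ)) - 2) :
    ∀ Q : ProjPt 2, Q ∉ Set.range Pt →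
      ∃ F : MvPolynomial (Fin 3) ℂ, F.IsHomogeneous d ∧
        (∀ i : Fin s, VanishesAt F (Pt i)) ∧ ¬ VanishesAt F Q :=
  stmt_2_general Pt hinj d (by rwa [Nat.card_fin]) hcurve
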